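/- Expected positive part of a symmetric stable variable: if Z is a random variable with law μ, then E[Z⁺] = (1/π)·Γ(1 − 1/Y)·c^{1/Y}, where a⁺ := max(a,0). (In particular, for c = 2·C·Γ(−Y)·|cos(πY/2)| this gives the leading coefficient d₁ of Theorem 3.1.) -/

import Mathlib

open MeasureTheory Filter Topology Set

/-!
Averaging `1 - cos (x u)` over `x` gives `1 - Re (charFun μ u)`, while
`∫₀^∞ (1 - cos (x u)) / u² du = π / 2 * |x|`. Tonelli's theorem therefore expresses the first
absolute moment of `μ` through its characteristic function, and for `exp (-c |u| ^ α)` the remaining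
integral over `u` is a Gamma integral. Tonelli's theorem is used two more times, with
`1 / u² = ∫₀^∞ s exp (-s u) ds` to evaluate the cosine integral, and with
`1 - exp (-c u ^ α) = ∫₀^c u ^ α exp (-s u ^ α) ds` to evaluate the stable one. By symmetry the
positive part carries half of the absolute moment.
-/

open ProbabilityTheory Real

section CosineIntegral

lemma integrableOn_Ioi_cos_mul_mul_exp_neg_mul {s : ℝ} (hs : 0 < s) (x : ℝ) :
    IntegrableOn (fun u ↦ cos (x * u) * exp (-(s * u))) (Ioi 0) := by
  have hexp : IntegrableOn (fun u ↦ exp (-(s * u))) (Ioi 0) := by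
    simpa only [neg_mul] using integrableOn_exp_mul_Ioi (neg_neg_of_pos hs) 0
  exact hexp.bdd_mul (c := 1) (by fun_prop) (ae_of_all _ fun u ↦ abs_cos_le_one _)

lemma integral_Ioi_cos_mul_mul_exp_neg_mul {s : ℝ} (hs : 0 < s) (x : ℝ) :
    ∫ u in Ioi 0, cos (x * u) * exp (-(s * u)) = s / (s ^ 2 + x ^ 2) := by
  set a : ℂ := ⟨-s, x⟩
  have ha : a.re < 0 := neg_neg_of_pos hs
  calc ∫ u in Ioi 0, cos (x * u) * exp (-(s * u))
    _ = ∫ u : ℝ in Ioi 0, (Complex.exp (a * u)).re := by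
      simp [a, Complex.exp_re, mul_comm]
    _ = (∫ u : ℝ in Ioi 0, Complex.exp (a * u)).re :=
      integral_re (integrableOn_exp_mul_complex_Ioi ha 0)
    _ = s / (s ^ 2 + x ^ 2) := by
      rw [integral_exp_mul_complex_Ioi ha]
      simp [a, Complex.div_re, Complex.normSq_apply, sq]

lemma lintegral_Ioi_one_sub_cos_mul_mul_exp_neg_mul {s : ℝ} (hs : 0 < s) (x : ℝ) :
    ∫⁻ u in Ioi 0, ENNReal.ofReal ((1 - cos (x * u)) * exp (-(s * u)))
      = ENNReal.ofReal (x ^ 2 / (s * (s ^ 2 + x ^ 2))) := by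
  have hexp := integrableOn_Ioi_cos_mul_mul_exp_neg_mul hs 0
  have hcos := integrableOn_Ioi_cos_mul_mul_exp_neg_mul hs x
  have hsub : ∀ u, (1 - cos (x * u)) * exp (-(s * u))
      = cos (0 * u) * exp (-(s * u)) - cos (x * u) * exp (-(s * u)) := fun u ↦ by
    rw [zero_mul, cos_zero, sub_mul]
  have hnonneg : ∀ u, 0 ≤ cos (0 * u) * exp (-(s * u)) - cos (x * u) * exp (-(s * u)) := fun u ↦ by
    rw [← hsub]
    exact mul_nonneg (sub_nonneg.2 (cos_le_one _)) (exp_pos _).le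
  simp_rw [hsub]
  rw [← ofReal_integral_eq_lintegral_ofReal (hexp.fun_sub hcos) (ae_of_all _ hnonneg),
    integral_sub hexp hcos, integral_Ioi_cos_mul_mul_exp_neg_mul hs,
    integral_Ioi_cos_mul_mul_exp_neg_mul hs]
  congr 1
  field_simp
  ring

lemma lintegral_Ioi_mul_exp_neg_mul {u : ℝ} (hu : 0 < u) :
    ∫⁻ s in Ioi 0, ENNReal.ofReal (s * exp (-(s * u))) = ENNReal.ofReal (1 / u ^ 2) := by
  have hint : IntegrableOn (fun s ↦ s * exp (-(s * u))) (Ioi 0) := by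
    simpa [mul_comm u] using
      integrableOn_rpow_mul_exp_neg_mul_rpow (s := 1) (p := 1) (by norm_num) one_pos hu
  have hval : ∫ s in Ioi 0, s * exp (-(s * u)) = 1 / u ^ 2 := by
    simpa [show (2 : ℝ) - 1 = 1 by norm_num, Gamma_two, mul_comm u] using
      integral_rpow_mul_exp_neg_mul_Ioi two_pos hu
  rw [← hval, ofReal_integral_eq_lintegral_ofReal hint]
  filter_upwards [ae_restrict_mem measurableSet_Ioi] with s hs
  exact mul_nonneg (le_of_lt hs) (exp_pos _).le

lemma lintegral_Ioi_sq_div_sq_add_sq (x : ℝ) :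
    ∫⁻ s in Ioi 0, ENNReal.ofReal (x ^ 2 / (s ^ 2 + x ^ 2)) = ENNReal.ofReal (π / 2) * ‖x‖ₑ := by
  rw [← enorm_abs, ← sq_abs]
  obtain hx | hx := (abs_nonneg x).eq_or_lt
  · simp [← hx]
  set y := |x|
  have hderiv : ∀ s ∈ Ici (0 : ℝ), HasDerivAt (fun s ↦ y * arctan (s / y))
      (y ^ 2 / (s ^ 2 + y ^ 2)) s := fun s _ ↦ by
    convert! (((hasDerivAt_id s).div_const y).arctan).const_mul y using 1
    simp only [id]
    field_simp
    ring
  have hlim : Tendsto (fun s ↦ y * arctan (s / y)) atTop (𝓝 (y * (π / 2))) :=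
    ((tendsto_arctan_atTop.mono_right nhdsWithin_le_nhds).comp
      (tendsto_id.atTop_div_const hx)).const_mul y
  have hnonneg : ∀ s ∈ Ioi (0 : ℝ), 0 ≤ y ^ 2 / (s ^ 2 + y ^ 2) := fun s _ ↦ by positivity
  rw [← ofReal_integral_eq_lintegral_ofReal (integrableOn_Ioi_deriv_of_nonneg' hderiv hnonneg hlim)
      ((ae_restrict_iff' measurableSet_Ioi).2 (ae_of_all _ hnonneg)),
    integral_Ioi_of_hasDerivAt_of_nonneg' hderiv hnonneg hlim, zero_div, arctan_zero, mul_zero,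
    sub_zero, mul_comm, ENNReal.ofReal_mul (by positivity), Real.enorm_of_nonneg hx.le]

theorem lintegral_Ioi_one_sub_cos_mul_div_sq (x : ℝ) :
    ∫⁻ u in Ioi 0, ENNReal.ofReal ((1 - cos (x * u)) / u ^ 2) = ENNReal.ofReal (π / 2) * ‖x‖ₑ := by
  have hcos (u : ℝ) : 0 ≤ 1 - cos (x * u) := sub_nonneg.2 (cos_le_one _)
  calc ∫⁻ u in Ioi 0, ENNReal.ofReal ((1 - cos (x * u)) / u ^ 2)
    _ = ∫⁻ u in Ioi 0, ∫⁻ s in Ioi 0,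
          ENNReal.ofReal ((1 - cos (x * u)) * (s * exp (-(s * u)))) := by
      refine setLIntegral_congr_fun measurableSet_Ioi fun u hu ↦ ?_
      simp_rw [ENNReal.ofReal_mul (hcos u)]
      rw [lintegral_const_mul' _ _ ENNReal.ofReal_ne_top, lintegral_Ioi_mul_exp_neg_mul hu,
        ← ENNReal.ofReal_mul (hcos u), mul_one_div]
    _ = ∫⁻ s in Ioi 0, ∫⁻ u in Ioi 0,
          ENNReal.ofReal ((1 - cos (x * u)) * (s * exp (-(s * u)))) :=
      lintegral_lintegral_swap (by fun_prop)
    _ = ∫⁻ s in Ioi 0, ENNReal.ofReal (x ^ 2 / (s ^ 2 + x ^ 2)) := by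
      refine setLIntegral_congr_fun measurableSet_Ioi fun s (hs : 0 < s) ↦ ?_
      simp_rw [mul_left_comm _ s, ENNReal.ofReal_mul hs.le]
      rw [lintegral_const_mul' _ _ ENNReal.ofReal_ne_top,
        lintegral_Ioi_one_sub_cos_mul_mul_exp_neg_mul hs, ← ENNReal.ofReal_mul hs.le]
      congr 1
      field_simp
    _ = ENNReal.ofReal (π / 2) * ‖x‖ₑ := lintegral_Ioi_sq_div_sq_add_sq x

end CosineIntegral

section GammaIntegral

lemma lintegral_Ioc_mul_exp_neg_mul {a c : ℝ} (ha : 0 ≤ a) (hc : 0 ≤ c) :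
    ∫⁻ s in Ioc 0 c, ENNReal.ofReal (a * exp (-s * a)) = ENNReal.ofReal (1 - exp (-(c * a))) := by
  have hderiv : ∀ s ∈ uIcc 0 c, HasDerivAt (fun s ↦ -exp (-s * a)) (a * exp (-s * a)) s :=
    fun s _ ↦ by
      convert! ((hasDerivAt_id s).neg.mul_const a).exp.neg using 1
      simp [mul_comm]
  rw [← ofReal_integral_eq_lintegral_ofReal
      (Continuous.integrableOn_Ioc (by fun_prop)) (ae_of_all _ fun s ↦ by positivity),
    ← intervalIntegral.integral_of_le hc, intervalIntegral.integral_eq_sub_of_hasDerivAt hderiv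
      (Continuous.intervalIntegrable (by fun_prop) _ _)]
  congr 1
  simp only [neg_mul, zero_mul, neg_zero, exp_zero]
  ring

lemma lintegral_Ioc_rpow {r c : ℝ} (hr : -1 < r) (hc : 0 ≤ c) :
    ∫⁻ s in Ioc 0 c, ENNReal.ofReal (s ^ r) = ENNReal.ofReal (c ^ (r + 1) / (r + 1)) := by
  have hint := (intervalIntegrable_iff_integrableOn_Ioc_of_le hc).1
    (intervalIntegral.intervalIntegrable_rpow' hr)
  rw [← ofReal_integral_eq_lintegral_ofReal hint, ← intervalIntegral.integral_of_le hc,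
    integral_rpow (Or.inl hr), zero_rpow (by linarith), sub_zero]
  filter_upwards [ae_restrict_mem measurableSet_Ioc] with s hs
  exact rpow_nonneg hs.1.le r

lemma lintegral_Ioi_rpow_mul_exp_neg_mul_rpow {p q b : ℝ} (hp : 0 < p) (hq : -1 < q) (hb : 0 < b) :
    ∫⁻ u in Ioi 0, ENNReal.ofReal (u ^ q * exp (-b * u ^ p))
      = ENNReal.ofReal (b ^ (-(q + 1) / p) * (1 / p) * Gamma ((q + 1) / p)) := by
  rw [← integral_rpow_mul_exp_neg_mul_rpow hp hq hb,
    ofReal_integral_eq_lintegral_ofReal (integrableOn_rpow_mul_exp_neg_mul_rpow hq hp hb)]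
  filter_upwards [ae_restrict_mem measurableSet_Ioi] with u hu
  exact mul_nonneg (rpow_nonneg (le_of_lt hu) q) (exp_pos _).le

theorem lintegral_Ioi_one_sub_exp_neg_mul_rpow_div_rpow {p q c : ℝ} (hq : 0 < q) (hqp : q < p)
    (hc : 0 ≤ c) :
    ∫⁻ u in Ioi 0, ENNReal.ofReal ((1 - exp (-(c * u ^ p))) / u ^ (q + 1))
      = ENNReal.ofReal (Gamma (1 - q / p) * c ^ (q / p) / q) := by
  have hp : 0 < p := hq.trans hqp
  have hqp' : 0 < 1 - q / p := sub_pos.2 ((div_lt_one hp).2 hqp)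
  have hexponent : (p - (q + 1) + 1) / p = 1 - q / p := by field_simp; ring
  calc ∫⁻ u in Ioi 0, ENNReal.ofReal ((1 - exp (-(c * u ^ p))) / u ^ (q + 1))
    _ = ∫⁻ u in Ioi 0, ∫⁻ s in Ioc 0 c,
          ENNReal.ofReal (u ^ (p - (q + 1)) * exp (-s * u ^ p)) := by
      refine setLIntegral_congr_fun measurableSet_Ioi fun u (hu : 0 < u) ↦ ?_
      simp_rw [rpow_sub hu, div_mul_eq_mul_div, div_eq_inv_mul _ (u ^ (q + 1)),
        ENNReal.ofReal_mul (inv_nonneg.2 (rpow_nonneg hu.le (q + 1)))]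
      rw [lintegral_const_mul' _ _ ENNReal.ofReal_ne_top,
        lintegral_Ioc_mul_exp_neg_mul (rpow_nonneg hu.le p) hc]
    _ = ∫⁻ s in Ioc 0 c, ∫⁻ u in Ioi 0,
          ENNReal.ofReal (u ^ (p - (q + 1)) * exp (-s * u ^ p)) :=
      lintegral_lintegral_swap (by fun_prop)
    _ = ∫⁻ s in Ioc 0 c,
          ENNReal.ofReal (1 / p * Gamma (1 - q / p)) * ENNReal.ofReal (s ^ (q / p - 1)) := by
      refine setLIntegral_congr_fun measurableSet_Ioc fun s hs ↦ ?_
      rw [lintegral_Ioi_rpow_mul_exp_neg_mul_rpow hp (by linarith) hs.1, neg_div, hexponent,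
        neg_sub, mul_assoc, mul_comm, ENNReal.ofReal_mul (by positivity)]
    _ = ENNReal.ofReal (Gamma (1 - q / p) * c ^ (q / p) / q) := by
      rw [lintegral_const_mul' _ _ ENNReal.ofReal_ne_top,
        lintegral_Ioc_rpow (by linarith [div_pos hq hp]) hc, sub_add_cancel,
        ← ENNReal.ofReal_mul (by positivity)]
      congr 1
      field_simp

end GammaIntegral

section CharFun

lemma lintegral_ofReal_one_sub_cos_mul (μ : Measure ℝ) [IsFiniteMeasure μ] (u : ℝ) :
    ∫⁻ x, ENNReal.ofReal (1 - cos (x * u)) ∂μ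
      = ENNReal.ofReal (μ.real univ - (charFun μ u).re) := by
  have hexp : Integrable (fun x : ℝ ↦ Complex.exp (u * x * Complex.I)) μ :=
    .of_bound (by fun_prop) 1 (ae_of_all _ fun x ↦ by simp [Complex.norm_exp])
  have hcos : Integrable (fun x ↦ cos (x * u)) μ :=
    .of_bound (by fun_prop) 1 (ae_of_all _ fun x ↦ abs_cos_le_one _)
  have hre : (charFun μ u).re = ∫ x, cos (x * u) ∂μ := by
    rw [charFun_apply_real, ← RCLike.re_eq_complex_re, ← integral_re hexp]
    simp [Complex.exp_re, mul_comm]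
  rw [hre, ← ofReal_integral_eq_lintegral_ofReal (by fun_prop)
      (ae_of_all _ fun x ↦ sub_nonneg.2 (cos_le_one _)),
    integral_sub (integrable_const 1) hcos, integral_const, smul_eq_mul, mul_one]

theorem lintegral_Ioi_sub_re_charFun_div_sq (μ : Measure ℝ) [IsFiniteMeasure μ] :
    ∫⁻ u in Ioi 0, ENNReal.ofReal ((μ.real univ - (charFun μ u).re) / u ^ 2)
      = ENNReal.ofReal (π / 2) * ∫⁻ x, ‖x‖ₑ ∂μ := by
  calc ∫⁻ u in Ioi 0, ENNReal.ofReal ((μ.real univ - (charFun μ u).re) / u ^ 2)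
    _ = ∫⁻ u in Ioi 0, ∫⁻ x, ENNReal.ofReal ((1 - cos (x * u)) / u ^ 2) ∂μ := by
      refine lintegral_congr fun u ↦ ?_
      simp_rw [div_eq_inv_mul, ENNReal.ofReal_mul (inv_nonneg.2 (sq_nonneg u))]
      rw [lintegral_const_mul' _ _ ENNReal.ofReal_ne_top, lintegral_ofReal_one_sub_cos_mul]
    _ = ∫⁻ x, (∫⁻ u in Ioi 0, ENNReal.ofReal ((1 - cos (x * u)) / u ^ 2)) ∂μ :=
      lintegral_lintegral_swap (by fun_prop)
    _ = ENNReal.ofReal (π / 2) * ∫⁻ x, ‖x‖ₑ ∂μ := by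
      simp_rw [lintegral_Ioi_one_sub_cos_mul_div_sq]
      exact lintegral_const_mul' _ _ ENNReal.ofReal_ne_top

lemma isNegInvariant_of_charFun_even {E : Type*} [NormedAddCommGroup E] [InnerProductSpace ℝ E]
    [CompleteSpace E] [SecondCountableTopology E] [MeasurableSpace E] [BorelSpace E]
    {μ : Measure E} [IsFiniteMeasure μ] (h : (charFun μ).Even) : μ.IsNegInvariant where
  neg_eq_self := by
    have : IsFiniteMeasure μ.neg := μ.isFiniteMeasure_map _
    refine Measure.ext_of_charFun (funext fun t ↦ ?_)
    rw [Measure.neg_def, show (Neg.neg : E → E) = ((-1 : ℝ) • ·) by ext; simp, charFun_map_smul,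
      neg_one_smul, h t]

end CharFun

lemma lintegral_enorm_eq_two_mul_lintegral_ofReal (μ : Measure ℝ) [μ.IsNegInvariant] :
    ∫⁻ x, ‖x‖ₑ ∂μ = 2 * ∫⁻ x, ENNReal.ofReal x ∂μ := by
  have hsplit (x : ℝ) : ‖x‖ₑ = ENNReal.ofReal x + ENNReal.ofReal (-x) := by
    obtain hx | hx := le_total 0 x
    · rw [Real.enorm_of_nonneg hx, ENNReal.ofReal_of_nonpos (neg_nonpos.2 hx), add_zero]
    · rw [← enorm_neg, Real.enorm_of_nonneg (neg_nonneg.2 hx), ENNReal.ofReal_of_nonpos hx,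
        zero_add]
  simp_rw [hsplit]
  rw [lintegral_add_left (by fun_prop), lintegral_neg_eq_self (fun x ↦ ENNReal.ofReal x), two_mul]

/-- The symmetric `α`-stable laws on `ℝ`, defined through the characteristic function
`exp (-c |u| ^ α)`. The parameter `c` multiplies `|u| ^ α`, so the usual scale parameter is
`c ^ (1 / α)`. -/
def IsSymmetricStable (μ : Measure ℝ) (α c : ℝ) : Prop :=
  ∀ u, charFun μ u = exp (-(c * |u| ^ α))

lemma isSymmetricStable_iff {μ : Measure ℝ} {α c : ℝ} :
    IsSymmetricStable μ α c ↔
      ∀ u : ℝ, ∫ x, Complex.exp (Complex.I * u * x) ∂μ = (exp (-(c * |u| ^ α)) : ℂ) := by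
  simp only [IsSymmetricStable, charFun_apply_real, Complex.ofReal_exp, mul_assoc,
    mul_comm Complex.I]

namespace IsSymmetricStable

variable {μ : Measure ℝ} [IsProbabilityMeasure μ] {α c : ℝ}

lemma nonneg (h : IsSymmetricStable μ α c) : 0 ≤ c := by
  have hone := norm_charFun_le_one (μ := μ) (1 : ℝ)
  rw [h, Complex.norm_real, norm_of_nonneg (exp_pos _).le, exp_le_one_iff] at hone
  simpa using hone

lemma isNegInvariant (h : IsSymmetricStable μ α c) : μ.IsNegInvariant :=
  isNegInvariant_of_charFun_even fun u ↦ by rw [h, h, abs_neg]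

lemma lintegral_enorm (h : IsSymmetricStable μ α c) (hα : 1 < α) :
    ∫⁻ x, ‖x‖ₑ ∂μ = ENNReal.ofReal (2 / π * Gamma (1 - 1 / α) * c ^ (1 / α)) := by
  have hπ : ENNReal.ofReal (π / 2) ≠ 0 := (ENNReal.ofReal_pos.2 (by positivity)).ne'
  refine (ENNReal.mul_right_inj hπ ENNReal.ofReal_ne_top).1 ?_
  calc ENNReal.ofReal (π / 2) * ∫⁻ x, ‖x‖ₑ ∂μ
    _ = ∫⁻ u in Ioi 0, ENNReal.ofReal ((1 - exp (-(c * u ^ α))) / u ^ (1 + 1 : ℝ)) := by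
      rw [← lintegral_Ioi_sub_re_charFun_div_sq]
      refine setLIntegral_congr_fun measurableSet_Ioi fun u (hu : 0 < u) ↦ ?_
      rw [h, Complex.ofReal_re, probReal_univ, abs_of_pos hu, one_add_one_eq_two, rpow_two]
    _ = ENNReal.ofReal (Gamma (1 - 1 / α) * c ^ (1 / α) / 1) :=
      lintegral_Ioi_one_sub_exp_neg_mul_rpow_div_rpow one_pos hα h.nonneg
    _ = ENNReal.ofReal (π / 2) * ENNReal.ofReal (2 / π * Gamma (1 - 1 / α) * c ^ (1 / α)) := by
      rw [← ENNReal.ofReal_mul (by positivity)]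
      congr 1
      field_simp

/-- `ENNReal.ofReal` truncates at `0`, so the left-hand side is the mean of the positive part. -/
lemma lintegral_ofReal (h : IsSymmetricStable μ α c) (hα : 1 < α) :
    ∫⁻ x, ENNReal.ofReal x ∂μ
      = ENNReal.ofReal (1 / π * Gamma (1 - 1 / α) * c ^ (1 / α)) := by
  have := h.isNegInvariant
  refine (ENNReal.mul_right_inj two_ne_zero ENNReal.ofNat_ne_top).1 ?_
  rw [← lintegral_enorm_eq_two_mul_lintegral_ofReal, h.lintegral_enorm hα,
    ← ENNReal.ofReal_ofNat 2, ← ENNReal.ofReal_mul zero_le_two]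
  congr 1
  ring

end IsSymmetricStable

theorem stmt10_general {Ω : Type*} [MeasurableSpace Ω] {P : Measure Ω} {μ : Measure ℝ}
    [IsProbabilityMeasure μ] {Z : Ω → ℝ} {α c : ℝ} (hα : 1 < α) (hμ : IsSymmetricStable μ α c)
    (hZ : HasLaw Z μ P) :
    ∫ ω, max (Z ω) 0 ∂P = 1 / π * Gamma (1 - 1 / α) * c ^ (1 / α) := by
  have hα' : 0 < 1 - 1 / α := sub_pos.2 ((div_lt_one (one_pos.trans hα)).2 hα)
  have hc := hμ.nonneg
  calc ∫ ω, max (Z ω) 0 ∂P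
    _ = ∫ x, max x 0 ∂μ := hZ.integral_comp (f := fun x ↦ max x 0) (by fun_prop)
    _ = (∫⁻ x, ENNReal.ofReal x ∂μ).toReal := by
      rw [integral_eq_lintegral_of_nonneg_ae (ae_of_all _ fun x ↦ le_max_right x 0) (by fun_prop)]
      simp
    _ = 1 / π * Gamma (1 - 1 / α) * c ^ (1 / α) := by
      rw [hμ.lintegral_ofReal hα, ENNReal.toReal_ofReal (by positivity)]

/-- Expected positive part of a symmetric `Y`-stable variable:
if `Z` has law `μ` with characteristic function `exp(−c·|u|^Y)`, then
`E[Z⁺] = (1/π)·Γ(1 − 1/Y)·c^(1/Y)`. -/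
theorem stmt10
    {Ω : Type} [MeasurableSpace Ω] (P : Measure Ω) [IsProbabilityMeasure P]
    (Y c : ℝ) (hY : Y ∈ Set.Ioo (1:ℝ) 2) (hc : 0 < c)
    (μ : Measure ℝ) [IsProbabilityMeasure μ]
    (hchar : ∀ u : ℝ, (∫ x, Complex.exp (Complex.I * u * x) ∂μ)
      = (Real.exp (-(c * |u| ^ Y)) : ℂ))
    (Z : Ω → ℝ) (hZmeas : Measurable Z) (hZlaw : Measure.map Z P = μ) :
    (∫ ω, max (Z ω) 0 ∂P) = (1 / Real.pi) * Real.Gamma (1 - 1/Y) * c ^ (1/Y) :=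
  stmt10_general hY.1 (isSymmetricStable_iff.2 hchar) ⟨hZmeas.aemeasurable, hZlaw⟩
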